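/- arXiv:1208.5241 — 2 statements merged into one kernel-verified Lean document; each statement's English description precedes it below -/
import Mathlib

section
/- For every t > 0 and every p ∈ [1,∞], the solution satisfies |u(t)|_{L^p} ≤ |u(t)|_{L∞} ≤ ∫_{S¹} u_x(t)⁺ ≤ min(D, σ⁻¹ t⁻¹), where g⁺ = max(g,0). -/
open MeasureTheory Set
open scoped ENNReal

/-- The `L^p` norm (on the circle, i.e. over one period `(0,1]`) of the `m`-th
derivative of a function `v : ℝ → ℝ` (identified with a function on `S¹ = ℝ/ℤ`). -/
noncomputable def sobLp (m : ℕ) (p : ℝ≥0∞) (v : ℝ → ℝ) : ℝ :=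
  (eLpNorm (iteratedDeriv m v) p (volume.restrict (Ioc (0:ℝ) 1))).toReal

/-- `u` is a smooth, space-periodic, zero-mean-value solution of the generalised
Burgers equation `u_t + f'(u) u_x - ν u_xx = 0` with strongly convex `f` and
nonzero initial condition. -/
structure IsBurgersSolution (f : ℝ → ℝ) (σ ν : ℝ) (u : ℝ → ℝ → ℝ) : Prop where
  hf : ContDiff ℝ (⊤ : ℕ∞) f
  hσ : 0 < σ
  hconv : ∀ y, σ ≤ iteratedDeriv 2 f y
  hν : 0 < ν
  hu : ContDiffOn ℝ (⊤ : ℕ∞) (Function.uncurry u) (Ici (0:ℝ) ×ˢ univ)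
  hper : ∀ t x, u t (x + 1) = u t x
  hpde : ∀ t, 0 < t → ∀ x,
    deriv (fun s => u s x) t + deriv f (u t x) * deriv (u t) x
      - ν * deriv (deriv (u t)) x = 0
  hmean : ∀ t, 0 ≤ t → ∫ x in Ioc (0:ℝ) 1, u t x = 0
  hinit : ∃ x, u 0 x ≠ 0

/-- The quantity `D = max(|u₀|₁⁻¹, |u₀|_{1,∞})`. -/
noncomputable def burgersD (u : ℝ → ℝ → ℝ) : ℝ :=
  max (sobLp 0 1 (u 0))⁻¹ (sobLp 1 ⊤ (u 0))

/-- `T₁ = D⁻² C̃⁻¹ / 4`. -/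
noncomputable def burgersT₁ (D Ct : ℝ) : ℝ := (D ^ 2)⁻¹ * Ct⁻¹ / 4

/-- `T₂ = max(3T₁/2, 2Dσ⁻¹)`. -/
noncomputable def burgersT₂ (σ D Ct : ℝ) : ℝ :=
  max (3 / 2 * burgersT₁ D Ct) (2 * D * σ⁻¹)

/-- Time average over `[T₁, T₂]`. -/
noncomputable def timeAvg (T₁ T₂ : ℝ) (A : ℝ → ℝ) : ℝ :=
  (T₂ - T₁)⁻¹ * ∫ t in T₁..T₂, A t

/-- The structure function `S_p(ℓ)`. -/
noncomputable def structFun (T₁ T₂ : ℝ) (u : ℝ → ℝ → ℝ) (p ℓ : ℝ) : ℝ :=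
  timeAvg T₁ T₂ (fun t => ∫ x in Ioc (0:ℝ) 1, |u t (x + ℓ) - u t x| ^ p)

lemma aux_second (g : ℝ → ℝ) (a : ℝ) (hg : ContDiff ℝ 2 g) (h : IsLocalMax g a) :
    deriv (deriv g) a ≤ 0 := by
  by_contra hc
  push Not at hc
  have h1 := isLocalMin_of_deriv_deriv_pos hc h.deriv_eq_zero hg.continuous.continuousAt
  have h2 : g =ᶠ[nhds a] fun _ => g a := by
    filter_upwards [h, h1] with x hx hx'
    exact le_antisymm hx hx'
  have h3 := h2.deriv.deriv_eq
  simp at h3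
  linarith

lemma aux_slice {f : ℝ → ℝ} {σ ν : ℝ} {u : ℝ → ℝ → ℝ}
    (hsol : IsBurgersSolution f σ ν u) (t : ℝ) (ht : 0 ≤ t) : ContDiff ℝ (⊤ : ℕ∞) (u t) := by
  have h : ContDiff ℝ (⊤ : ℕ∞) (fun x : ℝ => ((t, x) : ℝ × ℝ)) := by fun_prop
  have := hsol.hu.comp (s := univ) h.contDiffOn (fun x _ => ⟨ht, mem_univ _⟩)
  exact contDiffOn_univ.1 this

lemma aux_time {f : ℝ → ℝ} {σ ν : ℝ} {u : ℝ → ℝ → ℝ}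
    (hsol : IsBurgersSolution f σ ν u) (t : ℝ) (ht : 0 < t) (x : ℝ) :
    DifferentiableAt ℝ (fun s => u s x) t := by
  have h1 : DifferentiableAt ℝ (Function.uncurry u) (t, x) := by
    have : ContDiffAt ℝ (⊤ : ℕ∞) (Function.uncurry u) (t, x) :=
      hsol.hu.contDiffAt (prod_mem_nhds (Ici_mem_nhds ht) Filter.univ_mem)
    exact this.differentiableAt (by simp)
  exact DifferentiableAt.comp (g := Function.uncurry u) (f := fun s : ℝ => ((s, x) : ℝ × ℝ)) t h1
    (by fun_prop)

lemma aux_fd {f : ℝ → ℝ} {σ ν : ℝ} {u : ℝ → ℝ → ℝ}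
    (hsol : IsBurgersSolution f σ ν u) (a b : ℝ) (hab : a ≤ b) :
    σ * (b - a) ≤ deriv f b - deriv f a := by
  have hd : Differentiable ℝ (deriv f) := by
    have := hsol.hf.differentiable_iteratedDeriv 1 (by exact_mod_cast ENat.natCast_lt_top 1)
    simpa [iteratedDeriv_one] using this
  refine mul_sub_le_image_sub_of_le_deriv hd (fun x => ?_) hab
  have := hsol.hconv x
  rwa [iteratedDeriv_succ, iteratedDeriv_one] at this

lemma aux_per (g : ℝ → ℝ) (h : ∀ x, g (x + 1) = g x) (x : ℝ) : deriv g (x + 1) = deriv g x := by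
  rw [← deriv_comp_add_const]
  congr 1
  funext y
  exact h y

/-- Key Oleinik type bound, by doubling of variables. -/
lemma aux_oleinik {f : ℝ → ℝ} {σ ν : ℝ} {u : ℝ → ℝ → ℝ}
    (hsol : IsBurgersSolution f σ ν u) (A : ℝ) (hA : 0 < A)
    (h0 : ∀ x h, 0 ≤ h → u 0 (x + h) - u 0 x ≤ A * h)
    (T : ℝ) (hT : 0 ≤ T) (x₀ h₀ : ℝ) (hh₀ : h₀ ∈ Icc (0:ℝ) 1) :
    u T (x₀ + h₀) - u T x₀ ≤ A / (1 + σ * A * T) * h₀ := by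
  have hσ := hsol.hσ
  have hν := hsol.hν
  by_contra hcon
  push Not at hcon
  set M : ℝ → ℝ := fun t => A / (1 + σ * A * t) with hM
  have hden : ∀ t, 0 ≤ t → 0 < 1 + σ * A * t := fun t ht => by positivity
  have hMpos : ∀ t, 0 ≤ t → 0 < M t := fun t ht => div_pos hA (hden t ht)
  obtain ⟨ε, hε, hεT⟩ : ∃ ε : ℝ, 0 < ε ∧ ε * T < u T (x₀ + h₀) - u T x₀ - M T * h₀ := by
    have hd : 0 < u T (x₀ + h₀) - u T x₀ - M T * h₀ := by
      simp only [hM]; linarith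
    refine ⟨(u T (x₀ + h₀) - u T x₀ - M T * h₀) / (T + 1), by positivity, ?_⟩
    rw [div_mul_eq_mul_div, div_lt_iff₀ (by positivity)]
    nlinarith
  set W : ℝ × ℝ × ℝ → ℝ := fun q =>
    u q.1 (q.2.1 + q.2.2) - u q.1 q.2.1 - M q.1 * q.2.2 - ε * q.1 with hW
  set K : Set (ℝ × ℝ × ℝ) := Icc 0 T ×ˢ Icc 0 1 ×ˢ Icc 0 1 with hK
  have hKc : IsCompact K := isCompact_Icc.prod (isCompact_Icc.prod isCompact_Icc)
  have hWper : ∀ t x h, W (t, x, h) = W (t, Int.fract x, h) := by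
    intro t x h
    have hp : Function.Periodic (u t) 1 := hsol.hper t
    have e1 : u t (Int.fract x) = u t x := by
      rw [Int.fract]
      simpa using hp.sub_int_mul_eq (x := x) ⌊x⌋
    have e2 : u t (Int.fract x + h) = u t (x + h) := by
      rw [Int.fract, show x - ⌊x⌋ + h = (x + h) - ⌊x⌋ by ring]
      simpa using hp.sub_int_mul_eq (x := x + h) ⌊x⌋
    simp only [hW, e1, e2]
  have hfr : ∀ x : ℝ, Int.fract x ∈ Icc (0:ℝ) 1 := fun x =>
    ⟨Int.fract_nonneg x, (Int.fract_lt_one x).le⟩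
  have hWc : ContinuousOn W K := by
    have hu := hsol.hu.continuousOn
    have c1 : ContinuousOn (fun q : ℝ × ℝ × ℝ => u q.1 (q.2.1 + q.2.2)) K :=
      hu.comp (f := fun q : ℝ × ℝ × ℝ => ((q.1, q.2.1 + q.2.2) : ℝ × ℝ))
        (by fun_prop) (fun q hq => ⟨hq.1.1, mem_univ _⟩)
    have c2 : ContinuousOn (fun q : ℝ × ℝ × ℝ => u q.1 q.2.1) K :=
      hu.comp (f := fun q : ℝ × ℝ × ℝ => ((q.1, q.2.1) : ℝ × ℝ))
        (by fun_prop) (fun q hq => ⟨hq.1.1, mem_univ _⟩)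
    have c3 : ContinuousOn (fun q : ℝ × ℝ × ℝ => M q.1) K := by
      refine ContinuousOn.div (by fun_prop) (by fun_prop) (fun q hq => (hden _ hq.1.1).ne')
    exact ((c1.sub c2).sub (c3.mul (by fun_prop))).sub (by fun_prop)
  obtain ⟨⟨t, x, h⟩, hqK, hmax⟩ := hKc.exists_isMaxOn
    ⟨(T, Int.fract x₀, h₀), ⟨right_mem_Icc.2 hT, hfr _, hh₀⟩⟩ hWc
  have hmax' : ∀ t' x' h', t' ∈ Icc 0 T → h' ∈ Icc (0:ℝ) 1 → W (t', x', h') ≤ W (t, x, h) := by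
    intro t' x' h' ht' hh'
    rw [hWper]
    exact hmax (show (t', Int.fract x', h') ∈ K from ⟨ht', hfr _, hh'⟩)
  have hpos : 0 < W (t, x, h) := by
    refine lt_of_lt_of_le ?_ (hmax' T x₀ h₀ (right_mem_Icc.2 hT) hh₀)
    simp only [hW]; linarith
  obtain ⟨⟨ht0, htT⟩, -, hh0, hh1⟩ := hqK
  simp only at ht0 htT hh0 hh1
  have hMt := hMpos t ht0
  have htpos : 0 < t := by
    rcases ht0.eq_or_lt with e | e
    · exfalso
      subst e
      have := h0 x h hh0
      simp only [hW, hM, mul_zero, add_zero, div_one] at hpos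
      linarith
    · exact e
  have hεt : 0 < ε * t := by positivity
  have hhpos : 0 < h := by
    rcases hh0.eq_or_lt with e | e
    · exfalso
      subst e
      simp only [hW, mul_zero, add_zero] at hpos
      linarith
    · exact e
  have hhlt : h < 1 := by
    rcases hh1.eq_or_lt with e | e
    · exfalso
      subst e
      simp only [hW, hsol.hper] at hpos
      linarith
    · exact e
  have hC : ContDiff ℝ (⊤ : ℕ∞) (u t) := aux_slice hsol t ht0
  have hC2 : ContDiff ℝ 2 (u t) := by exact_mod_cast contDiff_infty.1 hC 2
  have hD : Differentiable ℝ (u t) := hC2.differentiable (by norm_num)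
  have hnear : ∀ᶠ k in nhds (0:ℝ), h + k ∈ Icc (0:ℝ) 1 := by
    have : Filter.Tendsto (fun k : ℝ => h + k) (nhds 0) (nhds h) := by
      have : Continuous fun k : ℝ => h + k := by fun_prop
      simpa using this.tendsto 0
    exact this (Icc_mem_nhds hhpos hhlt)
  -- variation in y
  have my : IsLocalMax (fun z => u t z - M t * z) (x + h) := by
    have : Filter.Tendsto (fun z : ℝ => z - (x + h)) (nhds (x + h)) (nhds 0) := by
      have : Continuous fun k : ℝ => k - (x + h) := by fun_prop
      simpa using this.tendsto (x + h)
    filter_upwards [this.eventually hnear] with z hz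
    have := hmax' t x _ ⟨ht0, htT⟩ hz
    simp only [hW] at this
    rw [show x + (h + (z - (x + h))) = z by ring] at this
    linarith
  have mx : IsLocalMax (fun z => M t * z - u t z) x := by
    have : Filter.Tendsto (fun z : ℝ => x - z) (nhds x) (nhds 0) := by
      have : Continuous fun k : ℝ => x - k := by fun_prop
      simpa using this.tendsto x
    filter_upwards [this.eventually hnear] with z hz
    have := hmax' t z _ ⟨ht0, htT⟩ hz
    simp only [hW] at this
    rw [show z + (h + (x - z)) = x + h by ring] at this
    linarith
  have dlin : ∀ z, HasDerivAt (fun z => M t * z) (M t) z := fun z => by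
    simpa using (hasDerivAt_id z).const_mul (M t)
  have ey : deriv (fun z => u t z - M t * z) = fun z => deriv (u t) z - M t := by
    funext z
    exact ((hD z).hasDerivAt.sub (dlin z)).deriv
  have ex : deriv (fun z => M t * z - u t z) = fun z => M t - deriv (u t) z := by
    funext z
    exact ((dlin z).sub (hD z).hasDerivAt).deriv
  have y1 : deriv (u t) (x + h) = M t := by
    have := my.deriv_eq_zero
    rw [ey] at this
    linarith
  have x1 : deriv (u t) x = M t := by
    have := mx.deriv_eq_zero
    rw [ex] at this
    linarith
  have y2 : deriv (deriv (u t)) (x + h) ≤ 0 := by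
    have := aux_second _ _ (by fun_prop) my
    rw [ey] at this
    simpa using this
  have x2 : 0 ≤ deriv (deriv (u t)) x := by
    have := aux_second _ _ (by fun_prop) mx
    rw [ex] at this
    simpa using this
  -- variation in time
  have hMd : HasDerivAt M (-(σ * M t ^ 2)) t := by
    have hne := (hden t ht0).ne'
    have h1 : HasDerivAt (fun s => 1 + σ * A * s) (σ * A) t := by
      simpa using ((hasDerivAt_id t).const_mul (σ * A)).const_add 1
    have := (hasDerivAt_const t A).div h1 hne
    have e : -(σ * M t ^ 2) =
        (0 * (1 + σ * A * t) - A * (σ * A)) / (1 + σ * A * t) ^ 2 := by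
      show -(σ * (A / (1 + σ * A * t)) ^ 2) = _
      field_simp
      ring
    rw [e]
    exact this
  have hWd : HasDerivAt (fun s => W (s, x, h))
      (deriv (fun s => u s (x + h)) t - deriv (fun s => u s x) t - (-(σ * M t ^ 2)) * h - ε) t := by
    have a1 := (aux_time hsol t htpos (x + h)).hasDerivAt
    have a2 := (aux_time hsol t htpos x).hasDerivAt
    have a3 : HasDerivAt (fun s => ε * s) ε t := by
      simpa using (hasDerivAt_id t).const_mul ε
    exact ((a1.sub a2).sub (hMd.mul_const h)).sub a3
  have htd : 0 ≤ deriv (fun s => u s (x + h)) t - deriv (fun s => u s x) t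
      - (-(σ * M t ^ 2)) * h - ε := by
    have hs := hasDerivWithinAt_iff_tendsto_slope.1 (hWd.hasDerivWithinAt (s := Iio t))
    have hs' := hs.mono_left (nhdsWithin_mono t (show Iio t ⊆ Iio t \ {t} from
      fun s hs => ⟨hs, (ne_of_lt hs)⟩))
    refine ge_of_tendsto hs' ?_
    have : ∀ᶠ s in nhdsWithin t (Iio t), 0 < s := nhdsWithin_le_nhds (Ioi_mem_nhds htpos)
    filter_upwards [this, self_mem_nhdsWithin] with s hs0 hst
    have hst' : s < t := hst
    have := hmax' s x h ⟨hs0.le, hst'.le.trans htT⟩ ⟨hh0, hh1⟩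
    rw [slope_def_field]
    exact div_nonneg_of_nonpos (by linarith) (by linarith)
  have p1 := hsol.hpde t htpos (x + h)
  have p2 := hsol.hpde t htpos x
  rw [y1] at p1
  rw [x1] at p2
  have hdiff : M t * h < u t (x + h) - u t x := by
    simp only [hW] at hpos
    linarith
  have hMh : 0 < M t * h := by positivity
  have hf := aux_fd hsol (u t x) (u t (x + h)) (by linarith)
  have b1 : M t * (σ * (M t * h)) ≤ M t * (deriv f (u t (x + h)) - deriv f (u t x)) := by
    apply mul_le_mul_of_nonneg_left _ hMt.le
    exact (mul_le_mul_of_nonneg_left hdiff.le hσ.le).trans hf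
  have b2 := mul_nonneg hν.le x2
  have b3 := mul_nonneg hν.le (neg_nonneg.2 y2)
  nlinarith

lemma aux_deriv_le {v : ℝ → ℝ} (hv : Differentiable ℝ v) (C : ℝ)
    (h : ∀ x, ∀ k ∈ Icc (0:ℝ) 1, v (x + k) - v x ≤ C * k) (x : ℝ) : deriv v x ≤ C := by
  have hs := hasDerivWithinAt_iff_tendsto_slope.1
    ((hv x).hasDerivAt.hasDerivWithinAt (s := Ioi x))
  have hs' := hs.mono_left (nhdsWithin_mono x (show Ioi x ⊆ Ioi x \ {x} from
      fun s hs => ⟨hs, (ne_of_gt hs)⟩))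
  refine le_of_tendsto hs' ?_
  have : ∀ᶠ s in nhdsWithin x (Ioi x), s < x + 1 :=
    nhdsWithin_le_nhds (Iio_mem_nhds (by linarith))
  filter_upwards [this, self_mem_nhdsWithin] with s hs0 hst
  have hst' : x < s := hst
  have := h x (s - x) ⟨by linarith, by linarith⟩
  rw [slope_def_field, div_le_iff₀ (by linarith)]
  simpa using this

lemma aux_Linf {g : ℝ → ℝ} (hg : Continuous g) (hp : ∀ x, g (x + 1) = g x) (x : ℝ) :
    g x ≤ (eLpNorm g ⊤ (volume.restrict (Ioc (0:ℝ) 1))).toReal := by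
  obtain ⟨B, hB⟩ := isCompact_Icc.exists_bound_of_continuousOn (s := Icc (0:ℝ) 1) hg.continuousOn
  have hfin : eLpNorm g ⊤ (volume.restrict (Ioc (0:ℝ) 1)) ≠ ⊤ := by
    rw [eLpNorm_exponent_top]
    refine ne_of_lt (eLpNormEssSup_lt_top_of_ae_bound (C := B) ?_)
    exact (ae_restrict_mem measurableSet_Ioc).mono fun y hy => hB y (Ioc_subset_Icc_self hy)
  set C := (eLpNorm g ⊤ (volume.restrict (Ioc (0:ℝ) 1))).toReal with hC
  have hae : ∀ᵐ y ∂(volume.restrict (Ioc (0:ℝ) 1)), g y ≤ C := by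
    have := ae_le_eLpNormEssSup (f := g) (μ := volume.restrict (Ioc (0:ℝ) 1))
    filter_upwards [this] with y hy
    rw [← eLpNorm_exponent_top] at hy
    have := ENNReal.toReal_mono hfin hy
    rw [toReal_enorm] at this
    exact (le_abs_self _).trans this
  have h1 : ∀ y ∈ Ioo (0:ℝ) 1, g y ≤ C := by
    have ho : IsOpen (Ioo (0:ℝ) 1 ∩ {y | C < g y}) :=
      isOpen_Ioo.inter (isOpen_lt continuous_const hg)
    have hz : volume (Ioo (0:ℝ) 1 ∩ {y | C < g y}) = 0 := by
      rw [ae_restrict_iff' measurableSet_Ioc] at hae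
      refine measure_mono_null ?_ (ae_iff.1 hae)
      rintro y ⟨hy, hy'⟩ hcon
      exact absurd (hcon (Ioo_subset_Ioc_self hy)) (not_le.2 hy')
    rw [ho.measure_eq_zero_iff volume] at hz
    intro y hy
    by_contra hc
    have : y ∈ Ioo (0:ℝ) 1 ∩ {y | C < g y} := ⟨hy, not_le.1 hc⟩
    rw [hz] at this
    exact this
  have h2 : ∀ y ∈ Icc (0:ℝ) 1, g y ≤ C := by
    rw [← closure_Ioo (zero_ne_one (α := ℝ))]
    exact fun y hy => closure_minimal (t := {y | g y ≤ C}) h1 (isClosed_le hg continuous_const) hy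
  have hp' : Function.Periodic g 1 := hp
  have e1 : g (Int.fract x) = g x := by
    rw [Int.fract]
    simpa using hp'.sub_int_mul_eq (x := x) ⌊x⌋
  rw [← e1]
  exact h2 _ ⟨Int.fract_nonneg x, (Int.fract_lt_one x).le⟩

lemma aux_sup {v : ℝ → ℝ} (hv : ContDiff ℝ 1 v) (hp : ∀ x, v (x + 1) = v x)
    (hm : ∫ x in Ioc (0:ℝ) 1, v x = 0) (x : ℝ) :
    |v x| ≤ ∫ x in Ioc (0:ℝ) 1, max (deriv v x) 0 := by
  have hvc := hv.continuous
  have hdc : Continuous (deriv v) := hv.continuous_deriv (by norm_num)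
  have hD : Differentiable ℝ v := hv.differentiable (by norm_num)
  have hmc : Continuous fun x => max (deriv v x) 0 := hdc.max continuous_const
  have hp' : Function.Periodic v 1 := hp
  have hmp : Function.Periodic (fun x => max (deriv v x) 0) 1 := fun y => by
    simp only [aux_per v hp y]
  -- a zero
  obtain ⟨a, ha⟩ : ∃ a, v a = 0 := by
    by_contra hne
    push Not at hne
    rw [← intervalIntegral.integral_of_le zero_le_one] at hm
    rcases lt_or_gt_of_ne (hne 0) with h0 | h0
    · have : ∀ y, v y < 0 := by
        intro y
        by_contra hy
        obtain ⟨z, hz⟩ := mem_range_of_exists_le_of_exists_ge hvc ⟨0, h0.le⟩ ⟨y, not_lt.1 hy⟩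
        exact hne z hz
      have h := intervalIntegral.intervalIntegral_pos_of_pos (f := fun y => - v y)
        (hvc.neg.intervalIntegrable 0 1) (fun y => neg_pos.2 (this y)) zero_lt_one
      rw [intervalIntegral.integral_neg] at h
      linarith
    · have : ∀ y, 0 < v y := by
        intro y
        by_contra hy
        obtain ⟨z, hz⟩ := mem_range_of_exists_le_of_exists_ge hvc ⟨y, not_lt.1 hy⟩ ⟨0, h0.le⟩
        exact hne z hz
      have h := intervalIntegral.intervalIntegral_pos_of_pos (f := v)
        (hvc.intervalIntegrable 0 1) this zero_lt_one
      linarith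
  obtain ⟨y, hy, hxy⟩ := hp'.exists_mem_Ico one_pos x a
  rw [hxy]
  have key : ∀ b c, a ≤ b → b ≤ c → c ≤ a + 1 →
      v c - v b ≤ ∫ x in Ioc (0:ℝ) 1, max (deriv v x) 0 := by
    intro b c hab hbc hca
    rw [← intervalIntegral.integral_of_le zero_le_one]
    have e := hmp.intervalIntegral_add_eq 0 a
    rw [zero_add] at e
    rw [e, ← intervalIntegral.integral_deriv_eq_sub (fun z _ => hD z) (hdc.intervalIntegrable _ _)]
    refine (intervalIntegral.integral_mono_on hbc (hdc.intervalIntegrable _ _)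
      (hmc.intervalIntegrable _ _) (fun z _ => le_max_left _ 0)).trans ?_
    exact intervalIntegral.integral_mono_interval hab hbc hca
      (Filter.Eventually.of_forall fun z => le_max_right _ _) (hmc.intervalIntegrable _ _)
  have k1 := key a y le_rfl hy.1 hy.2.le
  have k2 := key y (a + 1) hy.1 hy.2.le le_rfl
  rw [hp, ha] at k2
  rw [ha] at k1
  rw [abs_le]
  constructor <;> linarith

/-- For every `t > 0` and every `p ∈ [1,∞]`,
`|u(t)|_{L^p} ≤ |u(t)|_{L^∞} ≤ ∫_{S¹} u_x(t)⁺ ≤ min(D, σ⁻¹ t⁻¹)`. -/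
theorem statement1 (f : ℝ → ℝ) (σ ν : ℝ) (u : ℝ → ℝ → ℝ)
    (hsol : IsBurgersSolution f σ ν u) :
    ∀ t, 0 < t → ∀ p : ℝ≥0∞, 1 ≤ p →
      sobLp 0 p (u t) ≤ sobLp 0 ⊤ (u t) ∧
      sobLp 0 ⊤ (u t) ≤ ∫ x in Ioc (0:ℝ) 1, max (deriv (u t) x) 0 ∧
      (∫ x in Ioc (0:ℝ) 1, max (deriv (u t) x) 0) ≤ min (burgersD u) (σ⁻¹ * t⁻¹) := by
  intro t ht p hp
  have hC : ContDiff ℝ (⊤ : ℕ∞) (u t) := aux_slice hsol t ht.le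
  have hC1 : ContDiff ℝ 1 (u t) := hC.of_le (by exact_mod_cast le_top)
  have hI : ContDiff ℝ (⊤ : ℕ∞) (u 0) := aux_slice hsol 0 le_rfl
  have hI1 : ContDiff ℝ 1 (u 0) := hI.of_le (by exact_mod_cast le_top)
  have hsup := aux_sup hC1 (hsol.hper t) (hsol.hmean t ht.le)
  set I := ∫ x in Ioc (0:ℝ) 1, max (deriv (u t) x) 0 with hIdef
  have hI0 : 0 ≤ I := (abs_nonneg _).trans (hsup 0)
  have : IsProbabilityMeasure (volume.restrict (Ioc (0:ℝ) 1)) := ⟨by simp⟩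
  have hle : eLpNorm (u t) ⊤ (volume.restrict (Ioc (0:ℝ) 1)) ≤ ENNReal.ofReal I := by
    rw [eLpNorm_exponent_top]
    exact eLpNormEssSup_le_of_ae_bound (Filter.Eventually.of_forall hsup)
  refine ⟨?_, ?_, ?_⟩
  · simp only [sobLp, iteratedDeriv_zero]
    exact ENNReal.toReal_mono (ne_top_of_le_ne_top ENNReal.ofReal_ne_top hle)
      (eLpNorm_le_eLpNorm_of_exponent_le le_top hC1.continuous.aestronglyMeasurable)
  · simp only [sobLp, iteratedDeriv_zero]
    exact ENNReal.toReal_le_of_le_ofReal hI0 hle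
  · have hD0 : 0 ≤ burgersD u :=
      (show (0:ℝ) ≤ sobLp 1 ⊤ (u 0) from ENNReal.toReal_nonneg).trans (le_max_right _ _)
    have hbd : ∀ x, deriv (u 0) x ≤ burgersD u := by
      intro x
      refine le_trans ?_ (le_max_right _ _)
      simp only [sobLp, iteratedDeriv_one]
      exact aux_Linf (hI1.continuous_deriv (by norm_num)) (aux_per _ (hsol.hper 0)) x
    have hσ := hsol.hσ
    have hmain : ∀ A, burgersD u < A → ∀ x, deriv (u t) x ≤ A / (1 + σ * A * t) := by
      intro A hA x
      have hA0 : 0 < A := hD0.trans_lt hA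
      refine aux_deriv_le (hC1.differentiable (by norm_num)) _ (fun y k hk => ?_) x
      refine aux_oleinik hsol A hA0 (fun z h hh => ?_) t ht.le y k hk
      have := image_sub_le_mul_sub_of_deriv_le (hI1.differentiable (by norm_num))
        (fun w => (hbd w).trans hA.le) (show z ≤ z + h by linarith)
      simpa using this
    have hint : ∀ C, 0 ≤ C → (∀ x, deriv (u t) x ≤ C) → I ≤ C := by
      intro C hC0 h
      have hmc : Continuous fun x => max (deriv (u t) x) 0 :=
        (hC1.continuous_deriv (by norm_num)).max continuous_const
      rw [hIdef, ← intervalIntegral.integral_of_le zero_le_one]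
      have := intervalIntegral.integral_mono_on (zero_le_one (α := ℝ))
        (hmc.intervalIntegrable 0 1) (continuous_const.intervalIntegrable (μ := volume) 0 1)
        (fun x _ => max_le (h x) hC0)
      simpa using this
    refine le_min ?_ ?_
    · refine le_of_forall_gt_imp_ge_of_dense (fun A hA => ?_)
      have hA0 : 0 < A := hD0.trans_lt hA
      refine hint A hA0.le (fun x => (hmain A hA x).trans ?_)
      refine div_le_self hA0.le ?_
      have : 0 < σ * A * t := by positivity
      linarith
    · refine hint _ (by positivity) (fun x => (hmain (burgersD u + 1) (by linarith) x).trans ?_)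
      have hA0 : 0 < burgersD u + 1 := by linarith
      rw [← mul_inv, inv_eq_one_div, div_le_div_iff₀ (by positivity) (by positivity)]
      nlinarith
end

section
/- There is a constant C > 0 depending only on f and D such that for every ν ∈ (0,1] and every t ≥ 0, the solution satisfies ‖u(t)‖₁² ≤ C ν⁻¹. -/
open MeasureTheory Set
open scoped ENNReal

/-- Necessary second order condition at a global maximum. -/
lemma second_deriv_nonpos {g g' : ℝ → ℝ} {x d : ℝ} (hg : ∀ y, HasDerivAt g (g' y) y)
    (hd : HasDerivAt g' d x) (hmax : ∀ y, g y ≤ g x) : g' x = 0 ∧ d ≤ 0 := by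
  have hm : IsLocalMax g x := Filter.Eventually.of_forall hmax
  have h0 : g' x = 0 := by
    rw [← (hg x).deriv]; exact hm.deriv_eq_zero
  refine ⟨h0, ?_⟩
  by_contra hlt
  push Not at hlt
  have hgd : deriv g = g' := funext fun y => (hg y).deriv
  have hmin : IsLocalMin g x := by
    apply isLocalMin_of_deriv_deriv_pos
    · rw [hgd, hd.deriv]; exact hlt
    · rw [hgd]; exact h0
    · exact (hg x).continuousAt
  have hc : g =ᶠ[nhds x] fun _ => g x := by
    filter_upwards [hmin] with y hy
    exact le_antisymm (hmax y) hy
  have h1 : deriv g =ᶠ[nhds x] deriv (fun _ : ℝ => g x) := hc.deriv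
  have h2 : g' =ᶠ[nhds x] fun _ => 0 := by
    rw [hgd] at h1
    simpa using h1
  have h3 : deriv g' x = 0 := by
    rw [h2.deriv_eq]; simp
  rw [hd.deriv] at h3
  linarith

/-- A weak maximum principle on the circle. -/
lemma weak_max {v : ℝ → ℝ → ℝ} {M : ℝ}
    (hc : ContinuousOn (Function.uncurry v) (Ici (0:ℝ) ×ˢ univ))
    (hper : ∀ t x, v t (x + 1) = v t x)
    (h0 : ∀ x, v 0 x ≤ M)
    (H : ∀ t, 0 < t → ∀ x, (∀ y, v t y ≤ v t x) →
      ∃ d, HasDerivAt (fun s => v s x) d t ∧ d ≤ 0) :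
    ∀ t, 0 ≤ t → ∀ x, v t x ≤ M := by
  have hfr : ∀ t x, v t x = v t (Int.fract x) := by
    intro t x
    have hp : Function.Periodic (v t) 1 := hper t
    have := hp.sub_int_mul_eq (x := x) ⌊x⌋
    rw [mul_one] at this
    exact this.symm
  intro T hT x
  refine le_of_forall_pos_le_add fun δ hδ => ?_
  set ε := δ / (T + 1) with hε
  have hεpos : 0 < ε := by positivity
  have hεT : ε * T ≤ δ := by
    rw [hε, div_mul_eq_mul_div, div_le_iff₀ (by positivity)]
    nlinarith
  have hK : IsCompact (Icc (0:ℝ) T ×ˢ Icc (0:ℝ) 1) := isCompact_Icc.prod isCompact_Icc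
  have hsub : Icc (0:ℝ) T ×ˢ Icc (0:ℝ) 1 ⊆ Ici (0:ℝ) ×ˢ univ :=
    Set.prod_mono Icc_subset_Ici_self (subset_univ _)
  have hcφ : ContinuousOn (fun p : ℝ × ℝ => Function.uncurry v p - ε * p.1)
      (Icc (0:ℝ) T ×ˢ Icc (0:ℝ) 1) :=
    (hc.mono hsub).sub (by fun_prop)
  obtain ⟨⟨t0, x0⟩, ⟨ht0, hx0⟩, hmax⟩ := hK.exists_isMaxOn
    ⟨(0, 0), ⟨by simpa using hT, by simp⟩⟩ hcφ
  have hmax' : ∀ t ∈ Icc (0:ℝ) T, ∀ y, v t y - ε * t ≤ v t0 x0 - ε * t0 := by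
    intro t ht y
    have hy : Int.fract y ∈ Icc (0:ℝ) 1 := ⟨Int.fract_nonneg y, (Int.fract_lt_one y).le⟩
    have := hmax (show (t, Int.fract y) ∈ Icc (0:ℝ) T ×ˢ Icc (0:ℝ) 1 from ⟨ht, hy⟩)
    simp only [Set.mem_ofPred_eq, Function.uncurry] at this
    rw [hfr t y]; exact this
  simp only at ht0 hx0
  rcases ht0.1.eq_or_lt with h | h
  · have := hmax' T ⟨hT, le_rfl⟩ x
    subst h
    have := h0 x0
    linarith
  · exfalso
    obtain ⟨d, hd, hd0⟩ := H t0 h x0 (fun y => by have := hmax' t0 ht0 y; linarith)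
    have hd' : HasDerivAt (fun s => v s x0 - ε * s) (d - ε) t0 := by
      have := hd.sub ((hasDerivAt_id t0).const_mul ε)
      rw [mul_one] at this
      exact this
    have hge : 0 ≤ d - ε := by
      by_contra hneg
      push Not at hneg
      have hlim := (hasDerivAt_iff_tendsto_slope_left_right.1 hd').1
      have hev : ∀ᶠ s in nhdsWithin t0 (Iio t0),
          0 ≤ slope (fun s => v s x0 - ε * s) t0 s := by
        have : Ioo 0 t0 ∈ nhdsWithin t0 (Iio t0) := Ioo_mem_nhdsLT h
        filter_upwards [this] with s hs
        rw [slope_def_field]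
        apply div_nonneg_of_nonpos
        · have := hmax' s ⟨hs.1.le, hs.2.le.trans ht0.2⟩ x0
          linarith
        · linarith [hs.2]
      have := ge_of_tendsto hlim hev
      linarith
    linarith

section sol

variable {f : ℝ → ℝ} {σ ν : ℝ} {u : ℝ → ℝ → ℝ}

lemma sol_slice (h : IsBurgersSolution f σ ν u) {t : ℝ} (ht : 0 ≤ t) :
    ContDiff ℝ (⊤ : ℕ∞) (u t) := by
  rw [← contDiffOn_univ]
  have : ContDiffOn ℝ (⊤ : ℕ∞) (fun x : ℝ => (t, x)) univ := by
    apply ContDiff.contDiffOn; fun_prop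
  exact h.hu.comp this (fun x _ => ⟨ht, mem_univ _⟩)

lemma sol_uniqueDiff : UniqueDiffOn ℝ (Ici (0:ℝ) ×ˢ (univ : Set ℝ)) :=
  (uniqueDiffOn_Ici 0).prod uniqueDiffOn_univ

lemma sol_contOn_deriv (h : IsBurgersSolution f σ ν u) :
    ContinuousOn (Function.uncurry fun t x => deriv (u t) x) (Ici (0:ℝ) ×ˢ univ) := by
  have h1 : ContinuousOn (fderivWithin ℝ (Function.uncurry u) (Ici (0:ℝ) ×ˢ univ))
      (Ici (0:ℝ) ×ˢ univ) :=
    h.hu.continuousOn_fderivWithin sol_uniqueDiff (by simp)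
  have h2 : ContinuousOn (fun p => fderivWithin ℝ (Function.uncurry u)
      (Ici (0:ℝ) ×ˢ univ) p ((0:ℝ), (1:ℝ))) (Ici (0:ℝ) ×ˢ univ) :=
    h1.clm_apply continuousOn_const
  refine h2.congr ?_
  rintro ⟨t, x⟩ hp
  have hd : HasFDerivWithinAt (Function.uncurry u) (fderivWithin ℝ (Function.uncurry u)
      (Ici (0:ℝ) ×ˢ univ) (t, x)) (Ici (0:ℝ) ×ˢ univ) (t, x) :=
    ((h.hu.differentiableOn (by simp)) (t, x) hp).hasFDerivWithinAt
  have hl : HasDerivWithinAt (fun y : ℝ => (t, y)) ((0:ℝ), (1:ℝ)) univ x :=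
    ((hasDerivAt_const x t).prodMk (hasDerivAt_id x)).hasDerivWithinAt
  have := hd.comp_hasDerivWithinAt x hl (fun y _ => ⟨hp.1, mem_univ _⟩)
  rw [hasDerivWithinAt_univ] at this
  exact this.deriv

lemma sol_hasDerivAt_t (h : IsBurgersSolution f σ ν u) {t : ℝ} (ht : 0 < t) (x : ℝ) :
    HasDerivAt (fun s => u s x) (deriv (fun s => u s x) t) t := by
  have hat : ContDiffAt ℝ (⊤ : ℕ∞) (Function.uncurry u) (t, x) :=
    h.hu.contDiffAt (prod_mem_nhds (Ici_mem_nhds ht) Filter.univ_mem)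
  have hd : HasFDerivAt (Function.uncurry u) (fderiv ℝ (Function.uncurry u) (t, x)) (t, x) :=
    (hat.differentiableAt (by simp)).hasFDerivAt
  have hl : HasDerivAt (fun s : ℝ => (s, x)) ((1:ℝ), (0:ℝ)) t :=
    (hasDerivAt_id t).prodMk (hasDerivAt_const t x)
  have := hd.comp_hasDerivAt t hl
  exact this.differentiableAt.hasDerivAt

lemma sol_mixed (h : IsBurgersSolution f σ ν u) {t : ℝ} (ht : 0 < t) (x : ℝ) :
    ∃ d, HasDerivAt (fun s => deriv (u s) x) d t ∧
      HasDerivAt (fun y => deriv (fun s => u s y) t) d x := by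
  set U := Function.uncurry u with hU
  have hat : ∀ s, 0 < s → ∀ y, ContDiffAt ℝ (⊤ : ℕ∞) U (s, y) := fun s hs y =>
    h.hu.contDiffAt (prod_mem_nhds (Ici_mem_nhds hs) Filter.univ_mem)
  have hd : ∀ s, 0 < s → ∀ y, HasFDerivAt U (fderiv ℝ U (s, y)) (s, y) := fun s hs y =>
    ((hat s hs y).differentiableAt (by simp)).hasFDerivAt
  have hlx : ∀ s y : ℝ, HasDerivAt (fun y : ℝ => (s, y)) ((0:ℝ), (1:ℝ)) y := fun s y =>
    (hasDerivAt_const y s).prodMk (hasDerivAt_id y)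
  have hlt : ∀ s y : ℝ, HasDerivAt (fun s : ℝ => (s, y)) ((1:ℝ), (0:ℝ)) s := fun s y =>
    (hasDerivAt_id s).prodMk (hasDerivAt_const s y)
  have hx : ∀ s, 0 < s → ∀ y, deriv (u s) y = fderiv ℝ U (s, y) (0, 1) := fun s hs y =>
    ((hd s hs y).comp_hasDerivAt y (hlx s y)).deriv
  have htt : ∀ s, 0 < s → ∀ y, deriv (fun r => u r y) s = fderiv ℝ U (s, y) (1, 0) :=
    fun s hs y => by
      have h3 : HasDerivAt (fun r => u r y) (fderiv ℝ U (s, y) (1, 0)) s := by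
        have h4 := (hd s hs y).comp_hasDerivAt s (hlt s y)
        exact h4
      exact h3.deriv
  have hsym : IsSymmSndFDerivAt ℝ U (t, x) :=
    (hat t ht x).isSymmSndFDerivAt (by simp only [minSmoothness_of_isRCLikeNormedField]; norm_cast)
  have h2 : HasFDerivAt (fderiv ℝ U) (fderiv ℝ (fderiv ℝ U) (t, x)) (t, x) := by
    have : ContDiffAt ℝ 1 (fderiv ℝ U) (t, x) := (hat t ht x).fderiv_right (by norm_cast)
    exact (this.differentiableAt (by simp)).hasFDerivAt
  have hG : ∀ v : ℝ × ℝ, HasFDerivAt (fun p => fderiv ℝ U p v)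
      ((ContinuousLinearMap.apply ℝ ℝ v).comp (fderiv ℝ (fderiv ℝ U) (t, x))) (t, x) :=
    fun v => (ContinuousLinearMap.apply ℝ ℝ v).hasFDerivAt.comp (t, x) h2
  refine ⟨fderiv ℝ (fderiv ℝ U) (t, x) (1, 0) (0, 1), ?_, ?_⟩
  · have h3 : HasDerivAt (fun s => fderiv ℝ U (s, x) (0, 1))
        (fderiv ℝ (fderiv ℝ U) (t, x) (1, 0) (0, 1)) t := by
      have h4 := (hG (0, 1)).comp_hasDerivAt t (hlt t x)
      exact h4
    refine h3.congr_of_eventuallyEq ?_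
    filter_upwards [lt_mem_nhds ht] with s hs
    exact hx s hs x
  · rw [hsym.eq]
    have h3 : HasDerivAt (fun y => fderiv ℝ U (t, y) (1, 0))
        (fderiv ℝ (fderiv ℝ U) (t, x) (0, 1) (1, 0)) x :=
      (hG (1, 0)).comp_hasDerivAt x (hlx t x)
    refine h3.congr_of_eventuallyEq ?_
    exact Filter.Eventually.of_forall fun y => htt t ht y

lemma sol_per_deriv (h : IsBurgersSolution f σ ν u) (t x : ℝ) :
    deriv (u t) (x + 1) = deriv (u t) x := by
  rw [← deriv_comp_add_const]
  congr 1
  exact funext fun y => h.hper t y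

lemma sol_D (h : IsBurgersSolution f σ ν u) (x : ℝ) : |deriv (u 0) x| ≤ burgersD u := by
  have hcd : Continuous (deriv (u 0)) := (sol_slice h le_rfl).continuous_deriv (by simp)
  have hle : sobLp 1 ⊤ (u 0) ≤ burgersD u := le_max_right _ _
  refine le_trans ?_ hle
  unfold sobLp
  rw [iteratedDeriv_one]
  set μ := (volume.restrict (Ioc (0:ℝ) 1)) with hμ
  obtain ⟨B, hB⟩ := (isCompact_Icc (a := (0:ℝ)) (b := 1)).exists_bound_of_continuousOn
    hcd.continuousOn
  have hfin : eLpNorm (deriv (u 0)) ⊤ μ ≠ ⊤ := by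
    have : MemLp (deriv (u 0)) ⊤ μ := by
      refine memLp_top_of_bound hcd.aestronglyMeasurable B ?_
      rw [hμ]
      refine (ae_restrict_iff' measurableSet_Ioc).2 (Filter.Eventually.of_forall ?_)
      exact fun y hy => hB y (Ioc_subset_Icc_self hy)
    exact this.2.ne
  set E := (eLpNorm (deriv (u 0)) ⊤ μ).toReal with hE
  have hae : ∀ᵐ y ∂ μ, |deriv (u 0) y| ≤ E := by
    filter_upwards [ae_le_eLpNormEssSup (f := deriv (u 0)) (μ := μ)] with y hy
    rw [eLpNorm_exponent_top] at hfin hE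
    have := ENNReal.toReal_mono hfin hy
    simpa [hE] using this
  have hIoo : ∀ y ∈ Ioo (0:ℝ) 1, |deriv (u 0) y| ≤ E := by
    intro y hy
    by_contra hlt
    push Not at hlt
    set O := {z | E < |deriv (u 0) z|} ∩ Ioo (0:ℝ) 1 with hO
    have hOo : IsOpen O := (isOpen_lt continuous_const hcd.abs).inter isOpen_Ioo
    have hpos : 0 < volume O := hOo.measure_pos volume ⟨y, hlt, hy⟩
    have hz : volume O = 0 := by
      rw [hμ, ae_restrict_iff' measurableSet_Ioc] at hae
      refine measure_mono_null ?_ hae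
      intro z hz hz'
      exact absurd (hz' ⟨hz.2.1, hz.2.2.le⟩) (not_le.2 hz.1)
    exact hpos.ne' hz
  have hIcc : ∀ y ∈ Icc (0:ℝ) 1, |deriv (u 0) y| ≤ E := by
    have hcl : IsClosed {z | |deriv (u 0) z| ≤ E} := isClosed_le hcd.abs continuous_const
    have := closure_minimal (s := Ioo (0:ℝ) 1) hIoo hcl
    rwa [closure_Ioo (by norm_num)] at this
  have hp : Function.Periodic (deriv (u 0)) 1 := sol_per_deriv h 0
  have := hp.sub_int_mul_eq (x := x) ⌊x⌋
  rw [mul_one] at this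
  rw [← this]
  exact hIcc _ ⟨Int.fract_nonneg x, (Int.fract_lt_one x).le⟩

lemma sol_f1 (h : IsBurgersSolution f σ ν u) (y : ℝ) : HasDerivAt f (deriv f y) y :=
  (h.hf.differentiable (by simp) y).hasDerivAt

lemma sol_f2 (h : IsBurgersSolution f σ ν u) (y : ℝ) :
    HasDerivAt (deriv f) (iteratedDeriv 2 f y) y := by
  have : Differentiable ℝ (iteratedDeriv 1 f) := h.hf.differentiable_iteratedDeriv 1 (by norm_cast)
  rw [iteratedDeriv_one] at this
  rw [iteratedDeriv_succ, iteratedDeriv_one]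
  exact (this y).hasDerivAt

lemma sol_u1 (h : IsBurgersSolution f σ ν u) {t : ℝ} (ht : 0 ≤ t) (y : ℝ) :
    HasDerivAt (u t) (deriv (u t) y) y :=
  ((sol_slice h ht).differentiable (by simp) y).hasDerivAt

lemma sol_u2 (h : IsBurgersSolution f σ ν u) {t : ℝ} (ht : 0 ≤ t) (y : ℝ) :
    HasDerivAt (deriv (u t)) (deriv (deriv (u t)) y) y := by
  have : Differentiable ℝ (iteratedDeriv 1 (u t)) :=
    (sol_slice h ht).differentiable_iteratedDeriv 1 (by norm_cast)
  rw [iteratedDeriv_one] at this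
  exact (this y).hasDerivAt

lemma sol_u3 (h : IsBurgersSolution f σ ν u) {t : ℝ} (ht : 0 ≤ t) (y : ℝ) :
    HasDerivAt (deriv (deriv (u t))) (deriv (deriv (deriv (u t))) y) y := by
  have : Differentiable ℝ (iteratedDeriv 2 (u t)) :=
    (sol_slice h ht).differentiable_iteratedDeriv 2 (by norm_cast)
  rw [iteratedDeriv_succ, iteratedDeriv_one] at this
  exact (this y).hasDerivAt

/-- One-sided bound on the gradient. -/
lemma sol_upper (h : IsBurgersSolution f σ ν u) :
    ∀ t, 0 ≤ t → ∀ x, deriv (u t) x ≤ burgersD u := by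
  refine weak_max (v := fun t x => deriv (u t) x) (sol_contOn_deriv h) (sol_per_deriv h)
    (fun x => (le_abs_self _).trans (sol_D h x)) ?_
  intro t ht x hmax
  obtain ⟨d, hd1, hd2⟩ := sol_mixed h ht x
  refine ⟨d, hd1, ?_⟩
  obtain ⟨hw0, hw2⟩ := second_deriv_nonpos (sol_u2 h ht.le) (sol_u3 h ht.le x) hmax
  have hval : HasDerivAt (fun y => ν * deriv (deriv (u t)) y - deriv f (u t y) * deriv (u t) y)
      (ν * deriv (deriv (deriv (u t))) x - (iteratedDeriv 2 f (u t x) * deriv (u t) x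
        * deriv (u t) x + deriv f (u t x) * deriv (deriv (u t)) x)) x :=
    ((sol_u3 h ht.le x).const_mul ν).sub
      (((sol_f2 h (u t x)).comp x (sol_u1 h ht.le x)).mul (sol_u2 h ht.le x))
  have heq : (fun y => deriv (fun s => u s y) t) =
      fun y => ν * deriv (deriv (u t)) y - deriv f (u t y) * deriv (u t) y := by
    funext y
    linarith [h.hpde t ht y]
  rw [heq] at hd2
  rw [hd2.unique hval, hw0]
  have h1 : 0 ≤ iteratedDeriv 2 f (u t x) := h.hσ.le.trans (h.hconv _)
  have h2 := mul_nonneg h1 (mul_self_nonneg (deriv (u t) x))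
  have h3 := mul_nonneg h.hν.le (neg_nonneg.2 hw2)
  nlinarith

lemma sol_abs (h : IsBurgersSolution f σ ν u) {t : ℝ} (ht : 0 ≤ t) (x : ℝ) :
    |u t x| ≤ burgersD u := by
  have hD0 : 0 ≤ burgersD u := (abs_nonneg _).trans (sol_D h 0)
  have hcont : Continuous (u t) := (sol_slice h ht).continuous
  have hdiff : Differentiable ℝ (u t) := (sol_slice h ht).differentiable (by simp)
  have hp : Function.Periodic (u t) 1 := h.hper t
  have hint : ∫ y in (0:ℝ)..1, u t y = 0 := by
    rw [intervalIntegral.integral_of_le zero_le_one]; exact h.hmean t ht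
  obtain ⟨x0, hx0⟩ : ∃ x0, u t x0 = 0 := by
    by_contra hne
    push Not at hne
    have hii : IntervalIntegrable (u t) volume 0 1 := hcont.intervalIntegrable _ _
    rcases lt_or_gt_of_ne (hne 0) with h0 | h0
    · have hneg : ∀ y, u t y < 0 := by
        intro y
        by_contra hy
        push Not at hy
        obtain ⟨z, hz⟩ := mem_range_of_exists_le_of_exists_ge hcont ⟨0, h0.le⟩ ⟨y, hy⟩
        exact hne z hz
      have := intervalIntegral.intervalIntegral_pos_of_pos (f := fun y => - u t y) hii.neg
        (fun y => neg_pos.2 (hneg y)) (zero_lt_one)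
      rw [intervalIntegral.integral_neg, hint] at this
      simp at this
    · have hpos : ∀ y, 0 < u t y := by
        intro y
        by_contra hy
        push Not at hy
        obtain ⟨z, hz⟩ := mem_range_of_exists_le_of_exists_ge hcont ⟨y, hy⟩ ⟨0, h0.le⟩
        exact hne z hz
      have := intervalIntegral.intervalIntegral_pos_of_pos hii hpos (zero_lt_one)
      rw [hint] at this
      simp at this
  obtain ⟨y, ⟨hy1, hy2⟩, hyx⟩ := hp.exists_mem_Ico zero_lt_one x x0
  rw [hyx]
  have hmv : ∀ a b, a ≤ b → u t b - u t a ≤ burgersD u * (b - a) := fun a b hab =>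
    image_sub_le_mul_sub_of_deriv_le hdiff (sol_upper h t ht) hab
  have h1 := hmv x0 y hy1
  have h2 := hmv y (x0 + 1) hy2.le
  rw [hp x0, hx0] at h2
  rw [hx0] at h1
  rw [abs_le]
  constructor
  · nlinarith
  · nlinarith

/-- Lower bound on `ν u_x`. -/
lemma sol_lower (h : IsBurgersSolution f σ ν u) (hν1 : ν ≤ 1) {M : ℝ}
    (hM : ∀ y ∈ Icc (-burgersD u) (burgersD u), |f y| ≤ M) :
    ∀ t, 0 ≤ t → ∀ x, -(2 * M + burgersD u) ≤ ν * deriv (u t) x := by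
  have hD0 : 0 ≤ burgersD u := (abs_nonneg _).trans (sol_D h 0)
  have hfu : ∀ t, 0 ≤ t → ∀ x, |f (u t x)| ≤ M := fun t ht x =>
    hM _ (abs_le.1 (sol_abs h ht x))
  have key : ∀ t, 0 ≤ t → ∀ x, f (u t x) - ν * deriv (u t) x ≤ M + burgersD u := by
    refine weak_max (v := fun t x => f (u t x) - ν * deriv (u t) x) ?_ ?_ ?_ ?_
    · have h1 : ContinuousOn (fun p : ℝ × ℝ => f (Function.uncurry u p))
          (Ici (0:ℝ) ×ˢ univ) := h.hf.continuous.comp_continuousOn h.hu.continuousOn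
      exact h1.sub (continuousOn_const.mul (sol_contOn_deriv h))
    · intro t x
      simp only [h.hper, sol_per_deriv h]
    · intro x
      have h1 := (abs_le.1 (hfu 0 le_rfl x)).2
      have h2 := (abs_le.1 (sol_D h x)).1
      have := h.hν
      nlinarith
    · intro t ht x hmax
      obtain ⟨d, hd1, hd2⟩ := sol_mixed h ht x
      have hz : ∀ y, HasDerivAt (fun y => f (u t y) - ν * deriv (u t) y)
          (- deriv (fun s => u s y) t) y := by
        intro y
        have := ((sol_f1 h (u t y)).comp y (sol_u1 h ht.le y)).sub
          ((sol_u2 h ht.le y).const_mul ν)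
        have e : - deriv (fun s => u s y) t =
            deriv f (u t y) * deriv (u t) y - ν * deriv (deriv (u t)) y := by
          linarith [h.hpde t ht y]
        rw [e]
        exact this
      obtain ⟨h0, h2⟩ := second_deriv_nonpos hz hd2.neg hmax
      have hut : deriv (fun s => u s x) t = 0 := by linarith
      refine ⟨_, ((sol_f1 h (u t x)).comp t (sol_hasDerivAt_t h ht x)).sub (hd1.const_mul ν), ?_⟩
      rw [hut]
      have := h.hν
      nlinarith
  intro t ht x
  have h1 := key t ht x
  have h2 := (abs_le.1 (hfu t ht x)).1
  linarith

lemma sol_final (h : IsBurgersSolution f σ ν u) (hν1 : ν ≤ 1) {M : ℝ}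
    (hM : ∀ y ∈ Icc (-burgersD u) (burgersD u), |f y| ≤ M) {t : ℝ} (ht : 0 ≤ t) :
    sobLp 1 2 (u t) ^ 2 ≤ burgersD u * (2 * M + burgersD u) * ν⁻¹ := by
  have hν := h.hν
  set D := burgersD u with hD
  set K := (2 * M + D) * ν⁻¹ with hK
  have hcd : Continuous (deriv (u t)) := (sol_slice h ht).continuous_deriv (by simp)
  have hlow : ∀ x, -K ≤ deriv (u t) x := by
    intro x
    have := sol_lower h hν1 hM t ht x
    have h2 := mul_le_mul_of_nonneg_left this (inv_nonneg.2 hν.le)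
    rw [inv_mul_cancel_left₀ hν.ne'] at h2
    rw [hK]; linarith
  have hpt : ∀ x, deriv (u t) x ^ 2 ≤ (D - K) * deriv (u t) x + D * K := by
    intro x
    nlinarith [mul_nonneg (sub_nonneg.2 (sol_upper h t ht x)) (sub_nonneg.2 (hlow x))]
  have hmean : ∫ x in (0:ℝ)..1, deriv (u t) x = 0 := by
    rw [intervalIntegral.integral_deriv_eq_sub
      (fun x _ => (sol_u1 h ht x).differentiableAt) (hcd.intervalIntegrable _ _)]
    have := h.hper t 0
    rw [zero_add] at this
    rw [this, sub_self]
  have hI : ∫ x in (0:ℝ)..1, deriv (u t) x ^ 2 ≤ D * K := by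
    have h1 : ∫ x in (0:ℝ)..1, deriv (u t) x ^ 2 ≤
        ∫ x in (0:ℝ)..1, ((D - K) * deriv (u t) x + D * K) :=
      intervalIntegral.integral_mono_on zero_le_one
        ((hcd.pow 2).intervalIntegrable _ _)
        (((continuous_const.mul hcd).add continuous_const).intervalIntegrable _ _)
        (fun x _ => hpt x)
    have hi : IntervalIntegrable (fun x => (D - K) * deriv (u t) x) volume 0 1 :=
      (continuous_const.mul hcd).intervalIntegrable _ _
    rw [intervalIntegral.integral_add hi
      (continuous_const.intervalIntegrable _ _), intervalIntegral.integral_const_mul, hmean] at h1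
    simpa using h1
  have hmem : MemLp (deriv (u t)) 2 (volume.restrict (Ioc (0:ℝ) 1)) := by
    obtain ⟨B, hB⟩ := (isCompact_Icc (a := (0:ℝ)) (b := 1)).exists_bound_of_continuousOn
      hcd.continuousOn
    refine MemLp.of_bound hcd.aestronglyMeasurable B ?_
    refine (ae_restrict_iff' measurableSet_Ioc).2 (Filter.Eventually.of_forall ?_)
    exact fun y hy => hB y (Ioc_subset_Icc_self hy)
  have hS : sobLp 1 2 (u t) ^ 2 = ∫ x in (0:ℝ)..1, deriv (u t) x ^ 2 := by
    unfold sobLp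
    rw [iteratedDeriv_one, hmem.eLpNorm_eq_integral_rpow_norm (by simp) (by simp),
      intervalIntegral.integral_of_le zero_le_one]
    have hnn : 0 ≤ ∫ x in Ioc (0:ℝ) 1, deriv (u t) x ^ 2 :=
      integral_nonneg fun x => sq_nonneg _
    have he : (∫ x in Ioc (0:ℝ) 1, ‖deriv (u t) x‖ ^ (ENNReal.toReal 2)) =
        ∫ x in Ioc (0:ℝ) 1, deriv (u t) x ^ 2 := by
      congr 1; funext x; simp
    rw [he, ENNReal.toReal_ofReal (by positivity)]
    simp only [ENNReal.toReal_ofNat]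
    rw [← Real.rpow_natCast, ← Real.rpow_mul hnn]
    simp
  rw [hS]
  calc _ ≤ D * K := hI
    _ = _ := by rw [hK]; ring

end sol

/-- There is a constant `C > 0` depending only on `f` and `D` such
that for every `ν ∈ (0,1]` and every `t ≥ 0`, `‖u(t)‖₁² ≤ C ν⁻¹`. -/
theorem statement4 (f : ℝ → ℝ) (σ D : ℝ) :
    ∃ C > 0, ∀ ν, 0 < ν → ν ≤ 1 →
      ∀ u : ℝ → ℝ → ℝ, IsBurgersSolution f σ ν u → burgersD u = D →
        ∀ t, 0 ≤ t → sobLp 1 2 (u t) ^ 2 ≤ C * ν⁻¹ := by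
  by_cases hf : Continuous f
  · obtain ⟨M, hM⟩ := (isCompact_Icc (a := -D) (b := D)).exists_bound_of_continuousOn
      hf.continuousOn
    refine ⟨|D * (2 * M + D)| + 1, by positivity, ?_⟩
    intro ν hν hν1 u hu hD t ht
    subst hD
    refine (sol_final hu hν1 hM ht).trans ?_
    apply mul_le_mul_of_nonneg_right _ (inv_nonneg.2 hν.le)
    linarith [le_abs_self (burgersD u * (2 * M + burgersD u))]
  · refine ⟨1, one_pos, ?_⟩
    intro ν hν hν1 u hu
    exact absurd hu.hf.continuous hf
end
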